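/- For every n : ℕ, the number of model structures on the category [n] is exactly the binomial coefficient C(2n+1, n). -/

import Mathlib

universe v u

open CategoryTheory

section ModelDefs

variable {C : Type u} [Category.{v} C]

/-- `f` is a retract of `g` in the arrow category of `C`. -/
def IsRetractOfHom {X Y X' Y' : C} (f : X ⟶ Y) (g : X' ⟶ Y') : Prop :=
  ∃ (a : X ⟶ X') (b : Y ⟶ Y') (a' : X' ⟶ X) (b' : Y' ⟶ Y),
    a ≫ a' = 𝟙 X ∧ b ≫ b' = 𝟙 Y ∧ f ≫ b = a ≫ g ∧ g ≫ b' = a' ≫ f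

/-- A class of morphisms is stable under retracts (in the arrow category). -/
def StableUnderRetractsHom (P : MorphismProperty C) : Prop :=
  ∀ ⦃X Y X' Y' : C⦄ (f : X ⟶ Y) (g : X' ⟶ Y'), IsRetractOfHom f g → P g → P f

/-- A (Quillen) model structure on a category `C`: three classes of morphisms —
weak equivalences, fibrations, cofibrations — each closed under composition and
retracts, the weak equivalences satisfying two-out-of-three, cofibrations
(resp. acyclic cofibrations) having the left lifting property against acyclic
fibrations (resp. fibrations), and every morphism factoring as a cofibration
followed by an acyclic fibration and as an acyclic cofibration followed by a
fibration. A model category is a category with all finite limits and colimits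
equipped with such a structure. -/
structure ModelStructure (C : Type u) [Category.{v} C] where
  weq : MorphismProperty C
  fib : MorphismProperty C
  cof : MorphismProperty C
  weq_comp : weq.IsStableUnderComposition
  fib_comp : fib.IsStableUnderComposition
  cof_comp : cof.IsStableUnderComposition
  weq_retract : StableUnderRetractsHom weq
  fib_retract : StableUnderRetractsHom fib
  cof_retract : StableUnderRetractsHom cof
  weq_two_out_of_three : weq.HasTwoOutOfThreeProperty
  lift_cof_trivFib : ∀ ⦃A B X Y : C⦄ (i : A ⟶ B) (p : X ⟶ Y),
    cof i → fib p → weq p → HasLiftingProperty i p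
  lift_trivCof_fib : ∀ ⦃A B X Y : C⦄ (i : A ⟶ B) (p : X ⟶ Y),
    cof i → weq i → fib p → HasLiftingProperty i p
  factor_cof_trivFib : ∀ ⦃X Y : C⦄ (f : X ⟶ Y),
    ∃ (Z : C) (i : X ⟶ Z) (p : Z ⟶ Y), cof i ∧ fib p ∧ weq p ∧ i ≫ p = f
  factor_trivCof_fib : ∀ ⦃X Y : C⦄ (f : X ⟶ Y),
    ∃ (Z : C) (i : X ⟶ Z) (p : Z ⟶ Y), cof i ∧ weq i ∧ fib p ∧ i ≫ p = f

end ModelDefs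

/-!
A model structure is determined by its weak equivalences `W` and its acyclic fibrations `T`. On
`[n]` the pairs that occur are exactly those in which `W` comes from a partition of `[n]` into
intervals and `T` is a transfer system contained in `W`. A transfer system is recovered from its
heights `h(z) = #{x | (x ⟶ z) ∈ T}`, which form an arbitrary sequence of positive integers starting
at `1` and rising by at most `1` at each step: `x ⟶ z` is in `T` exactly when `h` is greater on
`(x, z]` than at `x`. The least element of a block of `W` has height `1`; replacing its height by
`0` records the partition as well, so that model structures correspond to the sequences of natural
numbers with `c₀ = 0` and `cᵢ₊₁ ≤ max(1, cᵢ) + 1`. By induction on `n`, removing the first term and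
summing a column of Pascal's triangle, there are `C(2n + max(1, k), n)` such sequences starting at
`k` instead of `0`.
-/

open MorphismProperty

section General

variable {C : Type u} [Category.{v} C]

lemma StableUnderRetractsHom.isStableUnderRetracts {P : MorphismProperty C}
    (hP : StableUnderRetractsHom P) : P.IsStableUnderRetracts where
  of_retract h hg := hP _ _ ⟨h.i.left, h.i.right, h.r.left, h.r.right, h.retract_left,
    h.retract_right, h.i_w.symm, h.r_w.symm⟩ hg

lemma stableUnderRetractsHom (P : MorphismProperty C) [P.IsStableUnderRetracts] :
    StableUnderRetractsHom P := by
  rintro X Y X' Y' f g ⟨a, b, a', b', ha, hb, hab, hab'⟩ hg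
  exact P.of_retract { i := Arrow.homMk a b hab.symm, r := Arrow.homMk a' b' hab'.symm } hg

/-- The conditions on classes `W` and `T` of morphisms under which they are the weak equivalences
and the acyclic fibrations of a model structure. The cofibrations are then `T.llp`, and the
fibrations are `(T.llp ⊓ W).rlp`. -/
structure IsModelPair (W T : MorphismProperty C) : Prop where
  weq_retracts : W.IsStableUnderRetracts
  weq_two_out_of_three : W.HasTwoOutOfThreeProperty
  trivFib_le_weq : T ≤ W
  cof_trivFib : IsWeakFactorizationSystem T.llp T
  trivCof_fib : IsWeakFactorizationSystem (T.llp ⊓ W) (T.llp ⊓ W).rlp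

namespace ModelStructure

attribute [ext] ModelStructure

variable (M : ModelStructure C)

/-- The acyclic fibrations of a model structure. -/
def trivFib : MorphismProperty C := M.fib ⊓ M.weq

/-- The acyclic cofibrations of a model structure. -/
def trivCof : MorphismProperty C := M.cof ⊓ M.weq

instance isWeakFactorizationSystem_cof_trivFib :
    IsWeakFactorizationSystem M.cof M.trivFib :=
  have := M.weq_retract.isStableUnderRetracts
  have := M.fib_retract.isStableUnderRetracts
  have := M.cof_retract.isStableUnderRetracts
  have : M.trivFib.IsStableUnderRetracts := inferInstanceAs (M.fib ⊓ M.weq).IsStableUnderRetracts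
  have : HasFactorization M.cof M.trivFib := ⟨fun f => by
    obtain ⟨Z, i, p, hi, hp, hpw, fac⟩ := M.factor_cof_trivFib f
    exact ⟨⟨Z, i, p, fac, hi, hp, hpw⟩⟩⟩
  .mk' _ _ fun i p hi hp => M.lift_cof_trivFib i p hi hp.1 hp.2

instance isWeakFactorizationSystem_trivCof_fib :
    IsWeakFactorizationSystem M.trivCof M.fib :=
  have := M.weq_retract.isStableUnderRetracts
  have := M.fib_retract.isStableUnderRetracts
  have := M.cof_retract.isStableUnderRetracts
  have : M.trivCof.IsStableUnderRetracts := inferInstanceAs (M.cof ⊓ M.weq).IsStableUnderRetracts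
  have : HasFactorization M.trivCof M.fib := ⟨fun f => by
    obtain ⟨Z, i, p, hi, hiw, hp, fac⟩ := M.factor_trivCof_fib f
    exact ⟨⟨Z, i, p, fac, ⟨hi, hiw⟩, hp⟩⟩⟩
  .mk' _ _ fun i p hi hp => M.lift_trivCof_fib i p hi.1 hi.2 hp

lemma llp_trivFib : M.trivFib.llp = M.cof := llp_eq_of_wfs _ _

lemma llp_trivFib_inf_weq : M.trivFib.llp ⊓ M.weq = M.trivCof := by
  rw [llp_trivFib, trivCof]

lemma rlp_trivCof : M.trivCof.rlp = M.fib := rlp_eq_of_wfs _ _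

lemma isModelPair : IsModelPair M.weq M.trivFib where
  weq_retracts := M.weq_retract.isStableUnderRetracts
  weq_two_out_of_three := M.weq_two_out_of_three
  trivFib_le_weq := inf_le_right
  cof_trivFib := by rw [llp_trivFib]; infer_instance
  trivCof_fib := by rw [llp_trivFib_inf_weq, rlp_trivCof]; infer_instance

lemma ext_of_weq_of_trivFib {M N : ModelStructure C} (hw : M.weq = N.weq)
    (ht : M.trivFib = N.trivFib) : M = N := by
  have hc : M.cof = N.cof := by rw [← llp_trivFib, ← llp_trivFib, ht]
  have hf : M.fib = N.fib := by rw [← rlp_trivCof, ← rlp_trivCof, trivCof, trivCof, hc, hw]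
  exact ModelStructure.ext hw hf hc

end ModelStructure

namespace IsModelPair

variable {W T : MorphismProperty C}

lemma trivFib_isStableUnderRetracts (h : IsModelPair W T) : T.IsStableUnderRetracts := by
  rw [← h.cof_trivFib.rlp]
  infer_instance

lemma rlp_inf_weq (h : IsModelPair W T) : (T.llp ⊓ W).rlp ⊓ W = T := by
  have := h.weq_two_out_of_three
  have := h.trivFib_isStableUnderRetracts
  refine le_antisymm ?_ (le_inf ?_ h.trivFib_le_weq)
  · rintro X Y p ⟨hp, hpw⟩
    obtain ⟨Z, i, q, fac, hi, hq⟩ := (h.cof_trivFib.hasFactorization.1 p).some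
    have hiw : W i := W.of_postcomp i q (h.trivFib_le_weq q hq) (by rwa [fac])
    have := hp i ⟨hi, hiw⟩
    exact T.of_retract (RetractArrow.ofRightLiftingProperty fac) hq
  · calc
      T = T.llp.rlp := h.cof_trivFib.rlp.symm
      _ ≤ (T.llp ⊓ W).rlp := antitone_rlp inf_le_left

/-- The model structure with weak equivalences `W` and acyclic fibrations `T`. -/
def modelStructure (h : IsModelPair W T) : ModelStructure C where
  weq := W
  fib := (T.llp ⊓ W).rlp
  cof := T.llp
  weq_comp := h.weq_two_out_of_three.toIsStableUnderComposition
  fib_comp := inferInstance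
  cof_comp := inferInstance
  weq_retract := have := h.weq_retracts; stableUnderRetractsHom _
  fib_retract := stableUnderRetractsHom _
  cof_retract := stableUnderRetractsHom _
  weq_two_out_of_three := h.weq_two_out_of_three
  lift_cof_trivFib _ _ _ _ _ p hi hp hpw := hi p (h.rlp_inf_weq.le _ ⟨hp, hpw⟩)
  lift_trivCof_fib _ _ _ _ i _ hi hiw hp := hp i ⟨hi, hiw⟩
  factor_cof_trivFib _ _ f := by
    obtain ⟨Z, i, p, fac, hi, hp⟩ := (h.cof_trivFib.hasFactorization.1 f).some
    obtain ⟨hpf, hpw⟩ := h.rlp_inf_weq.ge _ hp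
    exact ⟨Z, i, p, hi, hpf, hpw, fac⟩
  factor_trivCof_fib _ _ f := by
    obtain ⟨Z, i, p, fac, ⟨hi, hiw⟩, hp⟩ := (h.trivCof_fib.hasFactorization.1 f).some
    exact ⟨Z, i, p, hi, hiw, hp, fac⟩

end IsModelPair

/-- A model structure amounts to its classes of weak equivalences and of acyclic fibrations. -/
def ModelStructure.equivModelPair :
    ModelStructure C ≃ {P : MorphismProperty C × MorphismProperty C // IsModelPair P.1 P.2} where
  toFun M := ⟨(M.weq, M.trivFib), M.isModelPair⟩
  invFun P := P.2.modelStructure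
  left_inv M := ext_of_weq_of_trivFib rfl M.isModelPair.rlp_inf_weq
  right_inv P := Subtype.ext (Prod.ext rfl P.2.rlp_inf_weq)

end General

section Preorder

variable {α : Type*} [Preorder α]

lemma hasLiftingProperty_iff_le {a b x y : α} (i : a ⟶ b) (p : x ⟶ y) :
    HasLiftingProperty i p ↔ (a ≤ x → b ≤ y → b ≤ x) := by
  refine ⟨fun _ hax hby => ?_, fun h => ⟨fun {f g} _ => ⟨⟨⟨homOfLE (h f.le g.le), rfl, rfl⟩⟩⟩⟩⟩
  have sq : CommSq (homOfLE hax) i p (homOfLE hby) := ⟨rfl⟩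
  exact sq.lift.le

instance llp_hasOfPrecompProperty_top (P : MorphismProperty α) :
    P.llp.HasOfPrecompProperty ⊤ where
  of_precomp f g _ h _ _ p hp := (hasLiftingProperty_iff_le g p).2 fun hyu hzv =>
    (hasLiftingProperty_iff_le (f ≫ g) p).1 (h p hp) (f.le.trans hyu) hzv

instance rlp_hasOfPostcompProperty_top (P : MorphismProperty α) :
    P.rlp.HasOfPostcompProperty ⊤ where
  of_postcomp f g _ h _ _ i hi := (hasLiftingProperty_iff_le i f).2 fun hux hvy =>
    (hasLiftingProperty_iff_le i (f ≫ g)).1 (h i hi) hux (hvy.trans g.le)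

/-- A transfer system: a wide subcategory stable under pullback. In a linear order the only
nontrivial pullbacks are those of `x ⟶ z` along some `y ⟶ z` with `x ≤ y`, so that stability under
pullback becomes right cancellation. -/
class IsTransferSystem (T : MorphismProperty α) : Prop
    extends T.IsMultiplicative, T.HasOfPostcompProperty ⊤

/-- A convex class of morphisms: a wide subcategory containing both factors of each of its
morphisms. In a linear order it amounts to a partition into order-convex blocks. -/
class IsConvex (W : MorphismProperty α) : Prop
    extends IsTransferSystem W, W.HasOfPrecompProperty ⊤

/-- A transfer system `T` inside a convex class `W`: the combinatorial description of a model
structure on a finite linear order. -/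
structure IsConvexTransferPair (W T : MorphismProperty α) : Prop where
  weq_convex : IsConvex W
  trivFib_transfer : IsTransferSystem T
  trivFib_le_weq : T ≤ W

end Preorder

instance isStableUnderRetracts_of_partialOrder {α : Type*} [PartialOrder α]
    (P : MorphismProperty α) : P.IsStableUnderRetracts where
  of_retract {_ _ _ _ f g} h hg := by
    obtain rfl := le_antisymm h.i.left.le h.r.left.le
    obtain rfl := le_antisymm h.i.right.le h.r.right.le
    rwa [Subsingleton.elim f g]

section LinearOrder

variable {α : Type*} [LinearOrder α] {W T : MorphismProperty α}

namespace IsModelPair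

lemma isTransferSystem (h : IsModelPair W T) : IsTransferSystem T := by
  rw [← h.cof_trivFib.rlp]
  constructor

lemma trivCof_hasOfPrecompProperty_top (h : IsModelPair W T) :
    (T.llp ⊓ W).HasOfPrecompProperty ⊤ := by
  rw [← h.trivCof_fib.llp]
  infer_instance

lemma weq_hasOfPostcompProperty_top (h : IsModelPair W T) : W.HasOfPostcompProperty ⊤ where
  of_postcomp {x y z} f g _ hfg := by
    have := h.weq_two_out_of_three
    have := h.isTransferSystem
    have := h.trivCof_hasOfPrecompProperty_top
    obtain ⟨w, i, p, fac, hi, hp⟩ := (h.cof_trivFib.hasFactorization.1 (f ≫ g)).some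
    have hiw : W i := W.of_postcomp i p (h.trivFib_le_weq _ hp) (fac ▸ hfg)
    rcases le_total y w with hyw | hwy
    · have hyw' := (T.llp ⊓ W).of_precomp (W' := ⊤) f (homOfLE hyw) trivial ⟨hi, hiw⟩
      exact W.of_postcomp f (homOfLE hyw) hyw'.2 hiw
    · have hwy' := T.of_postcomp (W' := ⊤) (homOfLE hwy) g trivial hp
      exact W.comp_mem i (homOfLE hwy) hiw (h.trivFib_le_weq _ hwy')

lemma isConvexTransferPair (h : IsModelPair W T) : IsConvexTransferPair W T where
  weq_convex :=
    have := h.weq_two_out_of_three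
    have := h.isTransferSystem
    have := h.weq_hasOfPostcompProperty_top
    { id_mem x := h.trivFib_le_weq _ (T.id_mem x)
      of_precomp f g _ hfg := W.of_precomp f g (W.of_postcomp (W' := ⊤) f g trivial hfg) hfg }
  trivFib_transfer := h.isTransferSystem
  trivFib_le_weq := h.trivFib_le_weq

end IsModelPair

section LocallyFiniteOrder

variable [LocallyFiniteOrder α]

lemma hasFactorization_llp_of_isTransferSystem [IsTransferSystem T] :
    HasFactorization T.llp T where
  nonempty_mapFactorizationData {x y} f := by
    obtain ⟨u, ⟨⟨hxu, huy⟩, hu⟩, hmin⟩ :=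
      ((Set.finite_Icc x y).subset fun _ h => h.1 :
        {u | u ∈ Set.Icc x y ∧ ∃ p : u ⟶ y, T p}.Finite).exists_minimal
        ⟨y, ⟨f.le, le_rfl⟩, 𝟙 y, T.id_mem y⟩
    obtain ⟨p, hp⟩ := hu
    refine ⟨⟨u, homOfLE hxu, p, rfl, fun v w q hq => ?_, hp⟩⟩
    refine (hasLiftingProperty_iff_le _ q).2 fun hxv huw => ?_
    rcases le_total u v with huv | hvu
    · exact huv
    · have hvu' := T.of_postcomp (W' := ⊤) (homOfLE hvu) (homOfLE huw) trivial hq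
      exact hmin ⟨⟨hxv, hvu.trans huy⟩, _, T.comp_mem _ p hvu' hp⟩ hvu

lemma hasFactorization_llp_inf_of_isConvex [IsConvex W] :
    HasFactorization (T.llp ⊓ W) (T.llp ⊓ W).rlp where
  nonempty_mapFactorizationData {x y} f := by
    obtain ⟨b, ⟨⟨hxb, hby⟩, hb⟩, hmax⟩ :=
      ((Set.finite_Icc x y).subset fun _ h => h.1 :
        {b | b ∈ Set.Icc x y ∧ ∃ i : x ⟶ b, (T.llp ⊓ W) i}.Finite).exists_maximal
        ⟨x, ⟨le_rfl, f.le⟩, 𝟙 x, (T.llp ⊓ W).id_mem x⟩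
    obtain ⟨i, hi⟩ := hb
    refine ⟨⟨b, i, homOfLE hby, rfl, hi, fun a c j hj => ?_⟩⟩
    refine (hasLiftingProperty_iff_le j _).2 fun hab hcy => ?_
    rcases le_total c b with hcb | hbc
    · exact hcb
    · have hbc' := (T.llp ⊓ W).of_precomp (W' := ⊤) (homOfLE hab) (homOfLE hbc) trivial hj
      exact hmax ⟨⟨hxb.trans hbc, hcy⟩, _, (T.llp ⊓ W).comp_mem i _ hi hbc'⟩ hbc

lemma IsConvexTransferPair.isModelPair (h : IsConvexTransferPair W T) : IsModelPair W T where
  weq_retracts := inferInstance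
  weq_two_out_of_three :=
    have := h.weq_convex
    have : W.HasOfPostcompProperty W := .of_le W ⊤ le_top
    have : W.HasOfPrecompProperty W := .of_le W ⊤ le_top
    { }
  trivFib_le_weq := h.trivFib_le_weq
  cof_trivFib :=
    have := h.trivFib_transfer
    have := hasFactorization_llp_of_isTransferSystem (T := T)
    .mk' _ _ fun _ p hi hp => hi p hp
  trivCof_fib :=
    have := h.weq_convex
    have := hasFactorization_llp_inf_of_isConvex (W := W) (T := T)
    .mk' _ _ fun i _ hi hp => hp i hi

theorem isModelPair_iff_isConvexTransferPair : IsModelPair W T ↔ IsConvexTransferPair W T :=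
  ⟨IsModelPair.isConvexTransferPair, IsConvexTransferPair.isModelPair⟩

end LocallyFiniteOrder

end LinearOrder

section Height

variable {α : Type*}

/-- The objects `x` with a morphism `x ⟶ z` in the class `P`. -/
def sources [Preorder α] (P : MorphismProperty α) (z : α) : Set α := {x | ∃ f : x ⟶ z, P f}

/-- The number of sources of morphisms to `z` in a transfer system. Together these numbers
determine the transfer system. -/
noncomputable def height [Preorder α] (T : MorphismProperty α) (z : α) : ℕ := (sources T z).ncard

/-- The elements that are not the least of their block in the partition given by a convex
class. -/
def nonInitial [Preorder α] (W : MorphismProperty α) : Set α := {z | ∃ y < z, y ∈ sources W z}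

/-- The morphisms `x ⟶ z` such that `h` is greater on `(x, z]` than at `x`. -/
def recordMorphisms [Preorder α] {β : Type*} [LT β] (h : α → β) : MorphismProperty α :=
  fun x z _ => ∀ y ∈ Set.Ioc x z, h x < h y

/-- The morphisms `x ⟶ z` with `(x, z]` contained in `S`. -/
def morphismsWithin [Preorder α] (S : Set α) : MorphismProperty α :=
  fun x z _ => Set.Ioc x z ⊆ S

section Preorder

variable [Preorder α] {P : MorphismProperty α}

lemma mem_sources_iff {x z : α} (f : x ⟶ z) : x ∈ sources P z ↔ P f :=
  ⟨fun ⟨g, hg⟩ => Subsingleton.elim g f ▸ hg, fun hf => ⟨f, hf⟩⟩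

lemma le_of_mem_sources {x z : α} (h : x ∈ sources P z) : x ≤ z := h.choose.le

lemma self_mem_sources [P.ContainsIdentities] (z : α) : z ∈ sources P z := ⟨𝟙 z, P.id_mem z⟩

lemma mem_sources_trans [P.IsStableUnderComposition] {x y z : α} (hxy : x ∈ sources P y)
    (hyz : y ∈ sources P z) : x ∈ sources P z := by
  obtain ⟨f, hf⟩ := hxy
  obtain ⟨g, hg⟩ := hyz
  exact ⟨f ≫ g, P.comp_mem f g hf hg⟩

lemma mem_sources_of_le [P.HasOfPostcompProperty ⊤] {x y z : α} (hxz : x ∈ sources P z)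
    (hxy : x ≤ y) (hyz : y ≤ z) : x ∈ sources P y := by
  obtain ⟨_, hf⟩ := hxz
  exact ⟨homOfLE hxy, P.of_postcomp (W' := ⊤) (homOfLE hxy) (homOfLE hyz) trivial hf⟩

lemma mem_sources_of_ge [P.HasOfPrecompProperty ⊤] {x y z : α} (hxz : x ∈ sources P z)
    (hxy : x ≤ y) (hyz : y ≤ z) : y ∈ sources P z := by
  obtain ⟨_, hf⟩ := hxz
  exact ⟨homOfLE hyz, P.of_precomp (W' := ⊤) (homOfLE hxy) (homOfLE hyz) trivial hf⟩

lemma finite_sources [LocallyFiniteOrderBot α] (z : α) : (sources P z).Finite :=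
  (Set.finite_Iic z).subset fun _ => le_of_mem_sources

lemma strictMonoOn_sources_recordMorphisms {β : Type*} [Preorder β] (h : α → β) (z : α) :
    StrictMonoOn h (sources (recordMorphisms h) z) :=
  fun _ ⟨_, hf⟩ _ hy hxy => hf _ ⟨hxy, le_of_mem_sources hy⟩

end Preorder

lemma height_eq_one_of_notMem_nonInitial [PartialOrder α] {W T : MorphismProperty α}
    (h : IsConvexTransferPair W T) {z : α} (hz : z ∉ nonInitial W) : height T z = 1 := by
  have := h.trivFib_transfer
  refine Set.ncard_eq_one.2 ⟨z, Set.eq_singleton_iff_unique_mem.2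
    ⟨self_mem_sources z, fun x hx => ?_⟩⟩
  by_contra hxz
  obtain ⟨f, hf⟩ := hx
  exact hz ⟨x, f.le.lt_of_ne hxz, f, h.trivFib_le_weq f hf⟩

section LinearOrder

variable [LinearOrder α]

instance isTransferSystem_recordMorphisms {β : Type*} [Preorder β] (h : α → β) :
    IsTransferSystem (recordMorphisms h) where
  id_mem _ _ hy := absurd hy.1 hy.2.not_gt
  comp_mem {x y z} f g hf hg w hw := by
    rcases le_or_gt w y with hwy | hyw
    · exact hf w ⟨hw.1, hwy⟩
    · rcases f.le.eq_or_lt with rfl | hxy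
      · exact hg w hw
      · exact (hf y ⟨hxy, le_rfl⟩).trans (hg w ⟨hyw, hw.2⟩)
  of_postcomp _ g _ hfg y hy := hfg y ⟨hy.1, hy.2.trans g.le⟩

instance isConvex_morphismsWithin (S : Set α) : IsConvex (morphismsWithin S) where
  id_mem _ _ hy := absurd hy.1 hy.2.not_gt
  comp_mem _ _ hf hg := Set.Ioc_subset_Ioc_union_Ioc.trans (Set.union_subset hf hg)
  of_postcomp _ g _ hfg := (Set.Ioc_subset_Ioc_right g.le).trans hfg
  of_precomp f _ _ hfg := (Set.Ioc_subset_Ioc_left f.le).trans hfg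

variable [LocallyFiniteOrderBot α] {W T : MorphismProperty α}

lemma height_pos [T.ContainsIdentities] (z : α) : 0 < height T z :=
  (Set.ncard_pos (finite_sources z)).2 ⟨z, self_mem_sources z⟩

lemma height_lt_height [T.IsMultiplicative] {x y : α} (hxy : x < y) (h : x ∈ sources T y) :
    height T x < height T y := by
  refine Set.ncard_lt_ncard ((Set.ssubset_iff_of_subset fun u hu => mem_sources_trans hu h).2
    ⟨y, self_mem_sources y, fun hy => ?_⟩) (finite_sources y)
  exact hxy.not_ge (le_of_mem_sources hy)

/-- The least source of `z` above `x` has among its sources only itself and proper sources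
of `x`. -/
lemma exists_height_le_of_notMem_sources [IsTransferSystem T] {x z : α} (hxz : x ≤ z)
    (h : x ∉ sources T z) : ∃ u ∈ Set.Ioc x z, height T u ≤ height T x := by
  have hlt : x < z := hxz.lt_of_ne fun hxz => h (hxz ▸ self_mem_sources x)
  obtain ⟨u, ⟨huz, hxu⟩, hmin⟩ :=
    ((finite_sources (P := T) z).inter_of_left (Set.Ioi x)).exists_minimal
      ⟨z, self_mem_sources z, hlt⟩
  have hsub : sources T u ⊆ insert u (sources T x \ {x}) := by
    intro v hvu
    have hvz := mem_sources_trans hvu huz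
    rcases le_or_gt v x with hvx | hxv
    · exact Or.inr ⟨mem_sources_of_le hvz hvx hxz, fun hv => h (hv ▸ hvz)⟩
    · exact Or.inl ((le_of_mem_sources hvu).antisymm (hmin ⟨hvz, hxv⟩ (le_of_mem_sources hvu)))
  refine ⟨u, ⟨hxu, le_of_mem_sources huz⟩, ?_⟩
  calc
    height T u ≤ (insert u (sources T x \ {x})).ncard :=
      Set.ncard_le_ncard hsub ((finite_sources x).sdiff.insert u)
    _ ≤ (sources T x \ {x}).ncard + 1 := Set.ncard_insert_le u _
    _ = height T x := Set.ncard_sdiff_singleton_add_one (self_mem_sources x) (finite_sources x)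

lemma recordMorphisms_height [IsTransferSystem T] : recordMorphisms (height T) = T := by
  ext x z f
  rw [← mem_sources_iff (P := T)]
  refine ⟨fun hf => ?_, fun hxz y hy => height_lt_height hy.1 (mem_sources_of_le hxz hy.1.le hy.2)⟩
  by_contra hxz
  obtain ⟨u, hu, hle⟩ := exists_height_le_of_notMem_sources f.le hxz
  exact (hf u hu).not_ge hle

lemma morphismsWithin_nonInitial [IsConvex W] : morphismsWithin (nonInitial W) = W := by
  ext x z f
  rw [← mem_sources_iff (P := W)]
  refine ⟨fun hf => ?_, fun hxz y hy => ⟨x, hy.1, mem_sources_of_le hxz hy.1.le hy.2⟩⟩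
  obtain ⟨u, huz, hmin⟩ := (finite_sources (P := W) z).exists_minimal ⟨z, self_mem_sources z⟩
  rcases le_or_gt u x with hux | hxu
  · exact mem_sources_of_ge huz hux f.le
  · obtain ⟨v, hvu, hv⟩ := hf ⟨hxu, le_of_mem_sources huz⟩
    exact absurd (hmin (mem_sources_trans hv huz) hvu.le) hvu.not_ge

end LinearOrder

section Fin

variable {n : ℕ}

lemma nonInitial_morphismsWithin {S : Set (Fin (n + 1))} (hS : 0 ∉ S) :
    nonInitial (morphismsWithin S) = S := by
  ext z
  refine ⟨fun ⟨y, hyz, _, h⟩ => h ⟨hyz, le_rfl⟩, fun hz => ?_⟩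
  cases z using Fin.cases with
  | zero => exact absurd hz hS
  | succ i =>
    refine ⟨i.castSucc, Fin.castSucc_lt_succ, homOfLE (Fin.castSucc_le_succ i), fun y hy => ?_⟩
    rwa [hy.2.antisymm (Fin.castSucc_lt_iff_succ_le.1 hy.1)]

lemma exists_mem_sources_recordMorphisms {h : Fin (n + 1) → ℕ} (h_zero : h 0 = 1)
    (h_succ : ∀ i : Fin n, h i.succ ≤ h i.castSucc + 1) {v : ℕ} (hv : 1 ≤ v) {z : Fin (n + 1)}
    (hvz : v ≤ h z) : ∃ x ∈ sources (recordMorphisms h) z, h x = v := by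
  induction z using Fin.induction with
  | zero => exact ⟨0, self_mem_sources 0, by omega⟩
  | succ i ih =>
    rcases hvz.eq_or_lt with rfl | hlt
    · exact ⟨i.succ, self_mem_sources _, rfl⟩
    obtain ⟨x, ⟨f, hf⟩, rfl⟩ := ih (by have := h_succ i; omega)
    refine ⟨x, ⟨homOfLE (f.le.trans (Fin.castSucc_le_succ i)), fun y hy => ?_⟩, rfl⟩
    rcases hy.2.eq_or_lt with rfl | hyi
    · exact hlt
    · exact hf y ⟨hy.1, Fin.le_castSucc_iff.2 hyi⟩

lemma height_recordMorphisms {h : Fin (n + 1) → ℕ} (h_zero : h 0 = 1) (h_pos : ∀ z, 1 ≤ h z)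
    (h_succ : ∀ i : Fin n, h i.succ ≤ h i.castSucc + 1) : height (recordMorphisms h) = h := by
  funext z
  have hmono := strictMonoOn_sources_recordMorphisms h z
  have himage : h '' sources (recordMorphisms h) z = Set.Icc 1 (h z) := by
    refine Set.Subset.antisymm ?_ fun v hv =>
      exists_mem_sources_recordMorphisms h_zero h_succ hv.1 hv.2
    rintro _ ⟨x, hx, rfl⟩
    exact ⟨h_pos x, hmono.monotoneOn hx (self_mem_sources z) (le_of_mem_sources hx)⟩
  calc
    height (recordMorphisms h) z = (h '' sources (recordMorphisms h) z).ncard :=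
      hmono.injOn.ncard_image.symm
    _ = h z := by rw [himage, Set.ncard_Icc_nat, Nat.add_sub_cancel]

lemma height_succ_le (T : MorphismProperty (Fin (n + 1))) [T.HasOfPostcompProperty ⊤]
    (i : Fin n) : height T i.succ ≤ height T i.castSucc + 1 := by
  have hsub : sources T i.succ ⊆ insert i.succ (sources T i.castSucc) := by
    intro x hx
    rcases (le_of_mem_sources hx).eq_or_lt with rfl | hlt
    · exact Or.inl rfl
    · exact Or.inr (mem_sources_of_le hx (Fin.le_castSucc_iff.2 hlt) (Fin.castSucc_le_succ i))
  exact (Set.ncard_le_ncard hsub).trans (Set.ncard_insert_le _ _)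

end Fin

end Height

/-- The code of a pair of classes of morphisms: the height of `T` on the elements that are not the
least of their `W`-block, and `0` on those that are. Heights being positive, the zeros of the code
record `W`. -/
noncomputable def transferCode {α : Type*} [Preorder α] (W T : MorphismProperty α) : α → ℕ :=
  (nonInitial W).indicator (height T)

/-- The sequences of natural numbers `k = c₀, …, cₙ` in which a term exceeds the maximum of `1` and
the preceding term by at most `1`. For `k = 0` these are the codes of the convex transfer pairs on
`[n]`. -/
def transferCodes (n k : ℕ) : Set (Fin (n + 1) → ℕ) :=
  {c | c 0 = k ∧ ∀ i : Fin n, c i.succ ≤ max 1 (c i.castSucc) + 1}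

lemma support_transferCode {α : Type*} [LinearOrder α] [LocallyFiniteOrderBot α]
    (W T : MorphismProperty α) [T.ContainsIdentities] :
    Function.support (transferCode W T) = nonInitial W := by
  have hsupport : Function.support (height T) = Set.univ :=
    Set.eq_univ_of_forall fun z => (height_pos z).ne'
  rw [transferCode, Set.support_indicator, hsupport, Set.inter_univ]

lemma IsConvexTransferPair.max_one_transferCode {α : Type*} [LinearOrder α]
    [LocallyFiniteOrderBot α] {W T : MorphismProperty α} (h : IsConvexTransferPair W T) (z : α) :
    max 1 (transferCode W T z) = height T z := by
  have := h.trivFib_transfer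
  by_cases hz : z ∈ nonInitial W
  · rw [transferCode, Set.indicator_of_mem hz, max_eq_right (height_pos z)]
  · rw [transferCode, Set.indicator_of_notMem hz, height_eq_one_of_notMem_nonInitial h hz,
      max_eq_left zero_le_one]

lemma isConvexTransferPair_of_code {α : Type*} [LinearOrder α] (c : α → ℕ) :
    IsConvexTransferPair (morphismsWithin (Function.support c))
      (recordMorphisms fun z => max 1 (c z)) where
  weq_convex := inferInstance
  trivFib_transfer := inferInstance
  trivFib_le_weq x z f hf y hy := by
    have h_lt : max 1 (c x) < max 1 (c y) := hf y hy
    rw [Function.mem_support]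
    omega

lemma IsConvexTransferPair.transferCode_mem {n : ℕ} {W T : MorphismProperty (Fin (n + 1))}
    (h : IsConvexTransferPair W T) : transferCode W T ∈ transferCodes n 0 := by
  have := h.trivFib_transfer
  have h_initial : 0 ∉ nonInitial W := fun ⟨y, hy, _⟩ => Fin.not_lt_zero y hy
  refine ⟨Set.indicator_of_notMem h_initial _, fun i => ?_⟩
  calc
    transferCode W T i.succ ≤ height T i.succ := Set.indicator_le_self _ _ _
    _ ≤ height T i.castSucc + 1 := height_succ_le T i
    _ = max 1 (transferCode W T i.castSucc) + 1 := by rw [h.max_one_transferCode]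

lemma transferCode_of_code {n : ℕ} {c : Fin (n + 1) → ℕ} (hc : c ∈ transferCodes n 0) :
    transferCode (morphismsWithin (Function.support c)) (recordMorphisms fun z => max 1 (c z)) =
      c := by
  obtain ⟨h_zero, h_succ⟩ := hc
  have h_initial : (0 : Fin (n + 1)) ∉ Function.support c := Function.notMem_support.2 h_zero
  rw [transferCode, nonInitial_morphismsWithin h_initial,
    height_recordMorphisms (by rw [h_zero, max_eq_left zero_le_one]) (fun z => le_max_left 1 (c z))
      fun i => max_le le_add_self (h_succ i)]
  funext z
  by_cases hz : z ∈ Function.support c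
  · rw [Set.indicator_of_mem hz, max_eq_right (Nat.one_le_iff_ne_zero.2 hz)]
  · rw [Set.indicator_of_notMem hz, Function.notMem_support.1 hz]

/-- A convex transfer pair on `[n]` amounts to its code. -/
noncomputable def convexTransferPairEquiv (n : ℕ) :
    {P : MorphismProperty (Fin (n + 1)) × MorphismProperty (Fin (n + 1)) //
      IsConvexTransferPair P.1 P.2} ≃ transferCodes n 0 where
  toFun P := ⟨transferCode P.1.1 P.1.2, P.2.transferCode_mem⟩
  invFun c := ⟨(morphismsWithin (Function.support c.1), recordMorphisms fun z => max 1 (c.1 z)),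
    isConvexTransferPair_of_code c.1⟩
  left_inv P := by
    have := P.2.weq_convex
    have := P.2.trivFib_transfer
    simp only [support_transferCode, morphismsWithin_nonInitial, P.2.max_one_transferCode,
      recordMorphisms_height]
  right_inv c := Subtype.ext (transferCode_of_code c.2)

/-- Removing the first term of a sequence. -/
def transferCodesSuccEquiv (n k : ℕ) :
    transferCodes (n + 1) k ≃ Σ i : Fin (max 1 k + 2), transferCodes n i where
  toFun c := ⟨⟨c.1 1, Nat.lt_succ_of_le (by simpa [c.2.1] using c.2.2 0)⟩, Fin.tail c.1, rfl,
    fun i => c.2.2 i.succ⟩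
  invFun p := ⟨Fin.cons k p.2.1, rfl, Fin.cases
    (by simpa [p.2.2.1] using Nat.le_of_lt_succ p.1.2) p.2.2.2⟩
  left_inv c := Subtype.ext (by
    obtain ⟨c, rfl, -⟩ := c
    exact Fin.cons_self_tail c)
  right_inv p := by
    obtain ⟨⟨j, hj⟩, d, hdj, hd⟩ := p
    obtain rfl : d 0 = j := hdj
    rfl

instance subsingleton_transferCodes_zero (k : ℕ) : Subsingleton (transferCodes 0 k) where
  allEq c d := Subtype.ext (funext fun i => by rw [Fin.fin_one_eq_zero i, c.2.1, d.2.1])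

instance finite_transferCodes (n k : ℕ) : Finite (transferCodes n k) := by
  induction n generalizing k with
  | zero => infer_instance
  | succ n ih => exact .of_equiv _ (transferCodesSuccEquiv n k).symm

lemma sum_range_choose_two_mul_add_max_one (n k : ℕ) :
    ∑ i ∈ Finset.range (k + 2), (2 * n + max 1 i).choose n =
      (2 * n + k + 2).choose (n + 1) := by
  induction k with
  | zero =>
    rw [Finset.sum_range_succ, Finset.sum_range_one, max_eq_left zero_le_one, max_self,
      Nat.choose_succ_succ, ← Nat.choose_symm_half n]
  | succ k ih =>
    rw [Finset.sum_range_succ, ih, max_eq_right (by omega), add_comm, Nat.choose_succ_succ]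
    rfl

lemma card_transferCodes (n k : ℕ) :
    Nat.card (transferCodes n k) = (2 * n + max 1 k).choose n := by
  induction n generalizing k with
  | zero =>
    have : Nonempty (transferCodes 0 k) := ⟨fun _ => k, rfl, fun i => i.elim0⟩
    rw [Nat.card_eq_one_iff_unique.2 ⟨inferInstance, this⟩, Nat.choose_zero_right]
  | succ n ih =>
    calc
      Nat.card (transferCodes (n + 1) k)
        = ∑ i : Fin (max 1 k + 2), (2 * n + max 1 (i : ℕ)).choose n := by
          simp only [Nat.card_congr (transferCodesSuccEquiv n k), Nat.card_sigma, ih]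
      _ = ∑ i ∈ Finset.range (max 1 k + 2), (2 * n + max 1 i).choose n :=
          Fin.sum_univ_eq_sum_range (fun i => (2 * n + max 1 i).choose n) _
      _ = (2 * (n + 1) + max 1 k).choose (n + 1) := by
          rw [sum_range_choose_two_mul_add_max_one, mul_add_one, add_right_comm]

/-- The number of model structures on the category `[n]` is `C(2n+1, n)`. -/
theorem card_model_structures (n : ℕ) :
    Nat.card (ModelStructure (Fin (n + 1))) = Nat.choose (2 * n + 1) n :=
  calc
    Nat.card (ModelStructure (Fin (n + 1)))
      = Nat.card {P : MorphismProperty (Fin (n + 1)) × MorphismProperty (Fin (n + 1)) //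
          IsModelPair P.1 P.2} := Nat.card_congr ModelStructure.equivModelPair
    _ = Nat.card {P : MorphismProperty (Fin (n + 1)) × MorphismProperty (Fin (n + 1)) //
          IsConvexTransferPair P.1 P.2} := by simp only [isModelPair_iff_isConvexTransferPair]
    _ = Nat.card (transferCodes n 0) := Nat.card_congr (convexTransferPairEquiv n)
    _ = (2 * n + 1).choose n := card_transferCodes n 0
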